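/- arXiv:1911.08154 — 3 statements merged into one kernel-verified Lean document; each statement's English description precedes it below -/
import Mathlib

section
/- Let G be a 3-König-Egerváry graph and e an edge of G. Then e is α₃-critical in G if and only if both of the following hold: (i) e is μ₃-critical in G, and (ii) G − e is a 3-König-Egerváry graph. -/
open SimpleGraph

/-- `l` is a (not necessarily induced) `k`-path in `G`: a list of `k` pairwise distinct
vertices in which consecutive vertices are adjacent. -/
def IsKPath {V : Type*} (G : SimpleGraph V) (k : ℕ) (l : List V) : Prop :=
  l.length = k ∧ l.Nodup ∧ l.Chain' G.Adj

/-- A `k`-matching in `G`: a finite set of pairwise vertex-disjoint `k`-paths. -/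
def IsKMatching {V : Type*} (G : SimpleGraph V) (k : ℕ) (M : Finset (List V)) : Prop :=
  (∀ l ∈ M, IsKPath G k l) ∧
    (M : Set (List V)).Pairwise fun l₁ l₂ => ∀ v ∈ l₁, v ∉ l₂

/-- The `k`-matching number `μ_k(G)`: the maximum cardinality of a `k`-matching. -/
noncomputable def kMatchNum {V : Type*} (G : SimpleGraph V) (k : ℕ) : ℕ :=
  sSup {n | ∃ M : Finset (List V), IsKMatching G k M ∧ M.card = n}

/-- A maximum `k`-matching: a `k`-matching of cardinality `μ_k(G)`. -/
def IsMaxKMatching {V : Type*} (G : SimpleGraph V) (k : ℕ) (M : Finset (List V)) : Prop :=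
  IsKMatching G k M ∧ M.card = kMatchNum G k

/-- A `k`-independent set: a set of vertices whose induced subgraph contains no `k`-path. -/
def IsKIndepSet {V : Type*} (G : SimpleGraph V) (k : ℕ) (S : Finset V) : Prop :=
  ∀ l : List V, IsKPath G k l → ¬ (∀ v ∈ l, v ∈ S)

/-- The `k`-independence number `α_k(G)`. -/
noncomputable def kIndepNum {V : Type*} (G : SimpleGraph V) (k : ℕ) : ℕ :=
  sSup {n | ∃ S : Finset V, IsKIndepSet G k S ∧ S.card = n}

/-- A `k`-vertex cover: a set of vertices meeting every `k`-path of `G`. -/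
def IsKCover {V : Type*} (G : SimpleGraph V) (k : ℕ) (C : Finset V) : Prop :=
  ∀ l : List V, IsKPath G k l → ∃ v ∈ l, v ∈ C

/-- The `k`-vertex cover number `τ_k(G)`. -/
noncomputable def kCoverNum {V : Type*} (G : SimpleGraph V) (k : ℕ) : ℕ :=
  sInf {n | ∃ C : Finset V, IsKCover G k C ∧ C.card = n}

/-- A dissociation set: a set of vertices inducing a subgraph of maximum degree at most 1,
i.e. every vertex of `S` has at most one neighbour inside `S`. -/
def IsDissocSet {V : Type*} (G : SimpleGraph V) (S : Finset V) : Prop :=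
  ∀ v ∈ S, ∀ u ∈ S, ∀ w ∈ S, G.Adj v u → G.Adj v w → u = w

/-- The dissociation number `α₃(G)`. -/
noncomputable def dissNum {V : Type*} (G : SimpleGraph V) : ℕ :=
  sSup {n | ∃ S : Finset V, IsDissocSet G S ∧ S.card = n}

/-- A maximum dissociation set: a dissociation set of cardinality `α₃(G)`. -/
def IsMaxDissocSet {V : Type*} (G : SimpleGraph V) (S : Finset V) : Prop :=
  IsDissocSet G S ∧ S.card = dissNum G

/-- `uv` is an `α₃`-critical edge of `G`: deleting it increases the dissociation number. -/
def IsAlpha3Critical {V : Type*} (G : SimpleGraph V) (u v : V) : Prop :=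
  G.Adj u v ∧ dissNum G < dissNum (G.deleteEdges {s(u, v)})

/-- `uv` is a `μ₃`-critical edge of `G`: deleting it decreases the `3`-matching number. -/
def IsMu3Critical {V : Type*} (G : SimpleGraph V) (u v : V) : Prop :=
  G.Adj u v ∧ kMatchNum (G.deleteEdges {s(u, v)}) 3 < kMatchNum G 3

/-- An insulated `α₃`-critical edge: an `α₃`-critical edge sharing no end-vertex with any
other `α₃`-critical edge. -/
def IsInsulated {V : Type*} (G : SimpleGraph V) (u v : V) : Prop :=
  IsAlpha3Critical G u v ∧
    ∀ x y : V, IsAlpha3Critical G x y → s(x, y) ≠ s(u, v) →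
      x ≠ u ∧ x ≠ v ∧ y ≠ u ∧ y ≠ v

/-- A flexible vertex: one lying in some but not all maximum dissociation sets. -/
def IsFlexible {V : Type*} (G : SimpleGraph V) (v : V) : Prop :=
  (∃ S : Finset V, IsMaxDissocSet G S ∧ v ∈ S) ∧
    (∃ S : Finset V, IsMaxDissocSet G S ∧ v ∉ S)

/-- The set of static-included vertices: vertices lying in every maximum dissociation set. -/
def staticIncluded {V : Type*} (G : SimpleGraph V) : Set V :=
  {v | ∀ S : Finset V, IsMaxDissocSet G S → v ∈ S}

/-- The set of static-excluded vertices: vertices lying in no maximum dissociation set. -/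
def staticExcluded {V : Type*} (G : SimpleGraph V) : Set V :=
  {v | ∀ S : Finset V, IsMaxDissocSet G S → v ∉ S}

/-- The (unordered) edge `uv` occurs as an edge of the path recorded by the list `l`. -/
def EdgeInList {V : Type*} (l : List V) (u v : V) : Prop :=
  ∃ p ∈ l.zip l.tail, p = (u, v) ∨ p = (v, u)

/-!
Every `k`-path meets the complement of a `k`-independent set, and the paths of a `k`-matching are
disjoint, so `α_k(H) + μ_k(H) ≤ |V|` for every graph `H`. If `H` keeps all the edges of `G` that
avoid some vertex `u`, then `μ_k(G) ≤ μ_k(H) + 1`, because at most one path of a `k`-matching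
passes through `u`. When `α_k(G) + μ_k(G) = |V|`, an increase of `α_k` from `G` to `H` therefore
forces `μ_k` to decrease, and it decreases by exactly one, so that equality persists in `H`.
Dissociation sets are the `3`-independent sets, and `G - uv` keeps all the edges avoiding `u`.
-/

open scoped Finset

section KPath

variable {V : Type*} {G H : SimpleGraph V} {k : ℕ} {S C : Finset V} {M : Finset (List V)} {u : V}

theorem isKPath_three {a b c : V} : IsKPath G 3 [a, b, c] ↔ G.Adj a b ∧ G.Adj b c ∧ a ≠ c := by
  change _ ∧ _ ∧ List.IsChain G.Adj [a, b, c] ↔ _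
  have hab : G.Adj a b → a ≠ b := Adj.ne
  have hbc : G.Adj b c → b ≠ c := Adj.ne
  simp only [List.length_cons, List.length_nil, List.nodup_cons, List.mem_cons, List.not_mem_nil,
    List.nodup_nil, List.isChain_cons_cons, List.isChain_singleton]
  tauto

theorem isDissocSet_iff_isKIndepSet_three : IsDissocSet G S ↔ IsKIndepSet G 3 S := by
  constructor
  · intro hS l hl hlS
    obtain ⟨a, b, c, rfl⟩ := List.length_eq_three.mp hl.1
    obtain ⟨hab, hbc, hac⟩ := isKPath_three.mp hl
    exact hac (hS b (hlS b (by simp)) a (hlS a (by simp)) c (hlS c (by simp)) hab.symm hbc)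
  · intro hS v hv x hx y hy hvx hvy
    by_contra hxy
    exact hS [x, v, y] (isKPath_three.mpr ⟨hvx.symm, hvy, hxy⟩) (by simp [hv, hx, hy])

theorem dissNum_eq_kIndepNum_three (G : SimpleGraph V) : dissNum G = kIndepNum G 3 := by
  simp only [dissNum, kIndepNum, isDissocSet_iff_isKIndepSet_three]

theorem isKIndepSet_empty (G : SimpleGraph V) (hk : k ≠ 0) : IsKIndepSet G k ∅ := by
  rintro l ⟨rfl, -⟩ hl
  exact hk (List.length_eq_zero_iff.mpr (List.eq_nil_iff_forall_not_mem.mpr (by simpa using hl)))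

theorem IsKIndepSet.isKCover_compl [Fintype V] [DecidableEq V] (hS : IsKIndepSet G k S) :
    IsKCover G k Sᶜ := by
  intro l hl
  simpa using hS l hl

theorem isKMatching_empty (G : SimpleGraph V) (k : ℕ) : IsKMatching G k ∅ := by
  simp [IsKMatching]

theorem IsKMatching.eq_of_mem (hM : IsKMatching G k M) {l₁ l₂ : List V} (h₁ : l₁ ∈ M)
    (h₂ : l₂ ∈ M) (hu₁ : u ∈ l₁) (hu₂ : u ∈ l₂) : l₁ = l₂ := by
  by_contra hne
  exact hM.2 h₁ h₂ hne u hu₁ hu₂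

theorem IsKMatching.card_le_card_of_isKCover (hM : IsKMatching G k M) (hC : IsKCover G k C) :
    M.card ≤ C.card := by
  refine Finset.card_le_card_of_forall_subsingleton (fun l x ↦ x ∈ l) (fun l hl ↦ ?_) ?_
  · obtain ⟨x, hxl, hxC⟩ := hC l (hM.1 l hl)
    exact ⟨x, hxC, hxl⟩
  · exact fun x _ l₁ h₁ l₂ h₂ ↦ hM.eq_of_mem h₁.1 h₂.1 h₁.2 h₂.2

theorem IsKIndepSet.card_add_card_le [Fintype V] (hS : IsKIndepSet G k S)
    (hM : IsKMatching G k M) : S.card + M.card ≤ Fintype.card V := by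
  classical
  calc
    S.card + M.card ≤ S.card + Sᶜ.card := by
      gcongr
      exact hM.card_le_card_of_isKCover hS.isKCover_compl
    _ = Fintype.card V := S.card_add_card_compl

theorem IsKPath.of_deleteIncidenceSet_le {l : List V} (hl : IsKPath G k l) (hu : u ∉ l)
    (hGH : G.deleteIncidenceSet u ≤ H) : IsKPath H k l := by
  obtain ⟨hlen, hnodup, hchain⟩ := hl
  refine ⟨hlen, hnodup, List.IsChain.imp_of_mem_imp (fun x y hx hy hxy ↦ hGH ?_) hchain⟩
  exact deleteIncidenceSet_adj.mpr ⟨hxy, ne_of_mem_of_not_mem hx hu, ne_of_mem_of_not_mem hy hu⟩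

theorem IsKMatching.filter_notMem [DecidableEq V] (hM : IsKMatching G k M)
    (hGH : G.deleteIncidenceSet u ≤ H) : IsKMatching H k {l ∈ M | u ∉ l} := by
  refine ⟨fun l hl ↦ ?_, hM.2.mono (Finset.filter_subset _ M)⟩
  obtain ⟨hlM, hul⟩ := Finset.mem_filter.mp hl
  exact (hM.1 l hlM).of_deleteIncidenceSet_le hul hGH

theorem IsKMatching.card_filter_mem_le_one [DecidableEq V] (hM : IsKMatching G k M) (u : V) :
    #{l ∈ M | u ∈ l} ≤ 1 := by
  simp only [Finset.card_le_one, Finset.mem_filter]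
  exact fun l₁ h₁ l₂ h₂ ↦ hM.eq_of_mem h₁.1 h₂.1 h₁.2 h₂.2

theorem bddAbove_card_isKMatching [Finite V] (G : SimpleGraph V) (k : ℕ) :
    BddAbove {n | ∃ M : Finset (List V), IsKMatching G k M ∧ M.card = n} := by
  have hfin : {l : List V | l.length = k}.Finite := List.finite_length_eq V k
  refine ⟨hfin.toFinset.card, ?_⟩
  rintro _ ⟨M, hM, rfl⟩
  exact Finset.card_le_card fun l hl ↦ hfin.mem_toFinset.mpr (hM.1 l hl).1

theorem IsKMatching.card_le_kMatchNum [Finite V] (hM : IsKMatching G k M) :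
    M.card ≤ kMatchNum G k :=
  le_csSup (bddAbove_card_isKMatching G k) ⟨M, hM, rfl⟩

theorem exists_isMaxKMatching [Finite V] (G : SimpleGraph V) (k : ℕ) :
    ∃ M, IsMaxKMatching G k M :=
  Nat.sSup_mem (s := {n | ∃ M, IsKMatching G k M ∧ M.card = n})
    ⟨0, ∅, isKMatching_empty G k, rfl⟩ (bddAbove_card_isKMatching G k)

theorem exists_isKIndepSet_card_eq_kIndepNum [Finite V] (G : SimpleGraph V) (hk : k ≠ 0) :
    ∃ S, IsKIndepSet G k S ∧ S.card = kIndepNum G k := by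
  have := Fintype.ofFinite V
  refine Nat.sSup_mem (s := {n | ∃ S, IsKIndepSet G k S ∧ S.card = n})
    ⟨0, ∅, isKIndepSet_empty G hk, rfl⟩ ⟨Fintype.card V, ?_⟩
  rintro _ ⟨S, -, rfl⟩
  exact S.card_le_univ

theorem kIndepNum_add_kMatchNum_le_card [Fintype V] (G : SimpleGraph V) (hk : k ≠ 0) :
    kIndepNum G k + kMatchNum G k ≤ Fintype.card V := by
  obtain ⟨S, hS, hScard⟩ := exists_isKIndepSet_card_eq_kIndepNum G hk
  obtain ⟨M, hM, hMcard⟩ := exists_isMaxKMatching G k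
  rw [← hScard, ← hMcard]
  exact hS.card_add_card_le hM

theorem kMatchNum_le_kMatchNum_add_one [Finite V] (hGH : G.deleteIncidenceSet u ≤ H) :
    kMatchNum G k ≤ kMatchNum H k + 1 := by
  classical
  obtain ⟨M, hM, hMcard⟩ := exists_isMaxKMatching G k
  calc
    kMatchNum G k = #{l ∈ M | u ∉ l} + #{l ∈ M | u ∈ l} := by
      rw [← hMcard, add_comm, Finset.card_filter_add_card_filter_not]
    _ ≤ kMatchNum H k + 1 :=
      add_le_add (hM.filter_notMem hGH).card_le_kMatchNum (hM.card_filter_mem_le_one u)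

theorem deleteIncidenceSet_le_deleteEdges_singleton (G : SimpleGraph V) (u v : V) :
    G.deleteIncidenceSet u ≤ G.deleteEdges {s(u, v)} := by
  intro x y hxy
  obtain ⟨hadj, hxu, hyu⟩ := deleteIncidenceSet_adj.mp hxy
  simp [deleteEdges_adj, hadj, hxu, hyu]

theorem alpha3Critical_iff_mu3Critical_of_koenigEgervary_general [Fintype V] (hk : k ≠ 0)
    (hKE : kIndepNum G k + kMatchNum G k = Fintype.card V)
    (hGH : G.deleteIncidenceSet u ≤ H) :
    kIndepNum G k < kIndepNum H k ↔
      kMatchNum H k < kMatchNum G k ∧ kIndepNum H k + kMatchNum H k = Fintype.card V := by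
  have hduality : kIndepNum H k + kMatchNum H k ≤ Fintype.card V :=
    kIndepNum_add_kMatchNum_le_card H hk
  have hdrop : kMatchNum G k ≤ kMatchNum H k + 1 := kMatchNum_le_kMatchNum_add_one hGH
  omega

end KPath

/-- Let `G` be a `3`-König–Egerváry graph and `uv` an edge of `G`.  Then `uv` is
`α₃`-critical iff `uv` is `μ₃`-critical and `G - uv` is a `3`-König–Egerváry graph. -/
theorem alpha3Critical_iff_mu3Critical_of_koenigEgervary {V : Type*} [Fintype V]
    [DecidableEq V] (G : SimpleGraph V)
    (hKE : dissNum G + kMatchNum G 3 = Fintype.card V) (u v : V) (huv : G.Adj u v) :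
    IsAlpha3Critical G u v ↔
      IsMu3Critical G u v ∧
        dissNum (G.deleteEdges {s(u, v)}) + kMatchNum (G.deleteEdges {s(u, v)}) 3 =
          Fintype.card V := by
  simp only [IsAlpha3Critical, IsMu3Critical, huv, true_and, dissNum_eq_kIndepNum_three] at hKE ⊢
  exact alpha3Critical_iff_mu3Critical_of_koenigEgervary_general three_ne_zero hKE
    (deleteIncidenceSet_le_deleteEdges_singleton G u v)
end

section
/- Let T be a tree. A vertex of T is flexible (i.e., belongs to some but not all maximum dissociation sets of T) if and only if it is an end-vertex of an α₃-critical edge of T. -/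
open SimpleGraph

/-!
If `uv` is critical, then any maximum dissociation set of `G - uv` contains both `u` and `v`, and
erasing either one leaves a maximum dissociation set of `G`; hence `u` and `v` are flexible.

Conversely, let `S` and `R` be maximum dissociation sets with `v ∈ S` and `v ∉ R`. Among the
components of `G - v`, together with `{v}`, the sets `S` and `R` have the same total, and `S` wins
on `{v}`, so `R` wins on some component `C`. Replacing `S ∩ C` by `R ∩ C` yields a set larger than
`α₃(G)`, which only edges between `v` and `C` can prevent from being a dissociation set. There must
be such an edge, and if the edges at `v` are bridges there is only one; it is therefore critical.
-/

theorem exists_card_fiber_lt_of_card_fiber_lt {α β : Type*} [DecidableEq β] {f : α → β}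
    {s t : Finset α} {b : β} (hst : s.card ≤ t.card)
    (hb : (t.filter (f · = b)).card < (s.filter (f · = b)).card) :
    ∃ c, (s.filter (f · = c)).card < (t.filter (f · = c)).card := by
  classical
  by_contra! h
  have card_eq_sum {r : Finset α} (hr : r ⊆ s ∪ t) :
      r.card = ∑ c ∈ (s ∪ t).image f, (r.filter (f · = c)).card :=
    Finset.card_eq_sum_card_fiberwise fun _ hx ↦ Finset.mem_image_of_mem f (hr hx)
  have hb_mem : b ∈ (s ∪ t).image f := by
    obtain ⟨a, ha⟩ := Finset.card_pos.1 hb.pos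
    obtain ⟨has, rfl⟩ := Finset.mem_filter.1 ha
    exact Finset.mem_image_of_mem f (Finset.mem_union_left t has)
  refine hst.not_gt ?_
  rw [card_eq_sum Finset.subset_union_left, card_eq_sum Finset.subset_union_right]
  exact Finset.sum_lt_sum (fun c _ ↦ h c) ⟨b, hb_mem, hb⟩

theorem card_lt_card_filter_union_filter_not {α : Type*} [DecidableEq α] {p : α → Prop}
    [DecidablePred p] {s t : Finset α} (h : (s.filter p).card < (t.filter p).card) :
    s.card < (t.filter p ∪ s.filter (¬ p ·)).card := by
  rw [Finset.card_union_of_disjoint (Finset.disjoint_filter_filter_not t s p),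
    ← Finset.card_filter_add_card_filter_not (s := s) p]
  exact Nat.add_lt_add_right h _

section FlexibleVertices

variable {V : Type*} {G H : SimpleGraph V} {u v w x y : V}

section Dissociation

variable {R S : Finset V}

theorem IsDissocSet.subset (hS : IsDissocSet G S) (hRS : R ⊆ S) : IsDissocSet G R :=
  fun x hx y hy z hz ↦ hS x (hRS hx) y (hRS hy) z (hRS hz)

theorem IsDissocSet.anti (hS : IsDissocSet G S) (hHG : H ≤ G) : IsDissocSet H S :=
  fun x hx y hy z hz hxy hxz ↦ hS x hx y hy z hz (hHG hxy) (hHG hxz)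

theorem IsDissocSet.of_deleteEdges (hS : IsDissocSet (G.deleteEdges {s(u, v)}) S)
    (huv : u ∈ S → v ∉ S) : IsDissocSet G S := by
  have adj_deleteEdges {x y : V} (hx : x ∈ S) (hy : y ∈ S) (hxy : G.Adj x y) :
      (G.deleteEdges {s(u, v)}).Adj x y := by
    refine deleteEdges_adj.2 ⟨hxy, fun h ↦ ?_⟩
    rcases Sym2.eq_iff.1 h with ⟨rfl, rfl⟩ | ⟨rfl, rfl⟩
    exacts [huv hx hy, huv hy hx]
  exact fun x hx y hy z hz hxy hxz ↦
    hS x hx y hy z hz (adj_deleteEdges hx hy hxy) (adj_deleteEdges hx hz hxz)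

theorem IsDissocSet.filter_union_filter_not [DecidableEq V] {p : V → Prop} [DecidablePred p]
    (hR : IsDissocSet G R) (hS : IsDissocSet G S) (hp : ∀ x y, G.Adj x y → (p x ↔ p y)) :
    IsDissocSet G (R.filter p ∪ S.filter (¬ p ·)) := by
  intro x hx y hy z hz hxy hxz
  have hpy := hp x y hxy
  have hpz := hp x z hxz
  simp only [Finset.mem_union, Finset.mem_filter] at hx hy hz
  by_cases hpx : p x
  · exact hR x (by tauto) y (by tauto) z (by tauto) hxy hxz
  · exact hS x (by tauto) y (by tauto) z (by tauto) hxy hxz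

theorem bddAbove_card_isDissocSet [Finite V] (G : SimpleGraph V) :
    BddAbove {n | ∃ S : Finset V, IsDissocSet G S ∧ S.card = n} := by
  have := Fintype.ofFinite V
  refine ⟨Fintype.card V, ?_⟩
  rintro _ ⟨S, -, rfl⟩
  exact S.card_le_univ

theorem IsDissocSet.card_le_dissNum [Finite V] (hS : IsDissocSet G S) : S.card ≤ dissNum G :=
  le_csSup (bddAbove_card_isDissocSet G) ⟨S, hS, rfl⟩

theorem exists_isMaxDissocSet [Finite V] (G : SimpleGraph V) : ∃ S, IsMaxDissocSet G S :=
  Nat.sSup_mem (s := {n | ∃ S : Finset V, IsDissocSet G S ∧ S.card = n})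
    ⟨0, ∅, by simp [IsDissocSet], rfl⟩ (bddAbove_card_isDissocSet G)

end Dissociation

theorem IsAlpha3Critical.isFlexible_left [Finite V] (huv : IsAlpha3Critical G u v) :
    IsFlexible G u := by
  classical
  obtain ⟨hadj, hlt⟩ := huv
  obtain ⟨S, hS, hScard⟩ := exists_isMaxDissocSet (G.deleteEdges {s(u, v)})
  obtain ⟨hu, hv⟩ : u ∈ S ∧ v ∈ S := by
    by_contra h
    exact (hS.of_deleteEdges (not_and.1 h)).card_le_dissNum.not_gt (hScard ▸ hlt)
  have isMax_erase {x : V} (hx : x ∈ S) (hxuv : x = u ∨ x = v) :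
      IsMaxDissocSet G (S.erase x) := by
    have herase : IsDissocSet G (S.erase x) := by
      refine (hS.subset (S.erase_subset x)).of_deleteEdges ?_
      rcases hxuv with rfl | rfl <;> simp
    have hle := herase.card_le_dissNum
    have hcard := Finset.card_erase_add_one hx
    exact ⟨herase, by omega⟩
  exact ⟨⟨S.erase v, isMax_erase hv (.inr rfl), Finset.mem_erase.2 ⟨hadj.ne, hu⟩⟩,
    ⟨S.erase u, isMax_erase hu (.inl rfl), S.notMem_erase u⟩⟩

theorem eq_of_reachable_deleteIncidenceSet (h : (G.deleteIncidenceSet v).Reachable x v) :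
    x = v := by
  obtain ⟨p⟩ := h.symm
  cases p with
  | nil => rfl
  | cons hadj _ => exact absurd rfl (deleteIncidenceSet_adj.1 hadj).2.1

theorem eq_of_isBridge_of_reachable_deleteIncidenceSet (hu : G.Adj v u)
    (hbridge : G.IsBridge s(v, u)) (hw : G.Adj v w)
    (hwu : (G.deleteIncidenceSet v).Reachable w u) : w = u := by
  by_contra hne
  have hle : G.deleteIncidenceSet v ≤ G.deleteEdges {s(v, u)} :=
    deleteEdges_anti (Set.singleton_subset_iff.2 ((G.mem_incidenceSet v u).2 hu))
  have hvw : (G.deleteEdges {s(v, u)}).Adj v w :=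
    deleteEdges_adj.2 ⟨hw, fun h ↦ hne (Sym2.congr_right.1 h)⟩
  exact isBridge_iff.1 hbridge (hvw.reachable.trans (hwu.mono hle))

theorem connectedComponentMk_deleteIncidenceSet_eq_iff_of_adj
    {C : (G.deleteIncidenceSet v).ConnectedComponent} (hHG : H ≤ G)
    (hvC : (G.deleteIncidenceSet v).connectedComponentMk v ≠ C)
    (hv : ∀ w, H.Adj v w → (G.deleteIncidenceSet v).connectedComponentMk w ≠ C)
    (hxy : H.Adj x y) :
    (G.deleteIncidenceSet v).connectedComponentMk x = C ↔
      (G.deleteIncidenceSet v).connectedComponentMk y = C := by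
  rcases eq_or_ne x v with rfl | hxv
  · exact iff_of_false hvC (hv y hxy)
  rcases eq_or_ne y v with rfl | hyv
  · exact iff_of_false (hv x hxy.symm) hvC
  have hadj : (G.deleteIncidenceSet v).Adj x y := deleteIncidenceSet_adj.2 ⟨hHG hxy, hxv, hyv⟩
  rw [ConnectedComponent.sound hadj.reachable]

open scoped Classical in
theorem exists_component_card_lt (G : SimpleGraph V) {R S : Finset V} (hSR : S.card ≤ R.card)
    (hvS : v ∈ S) (hvR : v ∉ R) : ∃ C, (G.deleteIncidenceSet v).connectedComponentMk v ≠ C ∧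
      (S.filter ((G.deleteIncidenceSet v).connectedComponentMk · = C)).card <
        (R.filter ((G.deleteIncidenceSet v).connectedComponentMk · = C)).card := by
  set comp := (G.deleteIncidenceSet v).connectedComponentMk
  have hR_empty : R.filter (comp · = comp v) = ∅ := by
    refine Finset.filter_eq_empty_iff.2 fun x hx hxv ↦ hvR ?_
    exact eq_of_reachable_deleteIncidenceSet (ConnectedComponent.exact hxv) ▸ hx
  have hv_lt : (R.filter (comp · = comp v)).card < (S.filter (comp · = comp v)).card := by
    rw [hR_empty, Finset.card_empty]
    exact Finset.card_pos.2 ⟨v, Finset.mem_filter.2 ⟨hvS, rfl⟩⟩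
  obtain ⟨C, hC⟩ := exists_card_fiber_lt_of_card_fiber_lt (f := comp) hSR hv_lt
  refine ⟨C, ?_, hC⟩
  rintro rfl
  exact lt_asymm hC hv_lt

theorem IsFlexible.exists_isAlpha3Critical [Finite V] (hv : IsFlexible G v)
    (hbridge : ∀ u, G.Adj v u → G.IsBridge s(v, u)) : ∃ u, IsAlpha3Critical G v u := by
  classical
  obtain ⟨⟨S, ⟨hS, hScard⟩, hvS⟩, ⟨R, ⟨hR, hRcard⟩, hvR⟩⟩ := hv
  obtain ⟨C, hvC, hC⟩ :=
    exists_component_card_lt G (hScard.trans hRcard.symm).le hvS hvR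
  set comp := (G.deleteIncidenceSet v).connectedComponentMk
  have hlt : dissNum G < (R.filter (comp · = C) ∪ S.filter (¬ comp · = C)).card :=
    hScard ▸ card_lt_card_filter_union_filter_not hC
  have lt_dissNum_of_no_edge {H : SimpleGraph V} (hHG : H ≤ G)
      (hno : ∀ w, H.Adj v w → comp w ≠ C) : dissNum G < dissNum H :=
    hlt.trans_le ((hR.anti hHG).filter_union_filter_not (hS.anti hHG) fun _ _ ↦
      connectedComponentMk_deleteIncidenceSet_eq_iff_of_adj hHG hvC hno).card_le_dissNum
  obtain ⟨u, hu, huC⟩ : ∃ u, G.Adj v u ∧ comp u = C := by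
    by_contra! hno
    exact (lt_dissNum_of_no_edge le_rfl hno).false
  refine ⟨u, hu, lt_dissNum_of_no_edge (deleteEdges_le _) fun w hw hwC ↦ ?_⟩
  obtain ⟨hw, hne⟩ := deleteEdges_adj.1 hw
  have hwu : w = u := eq_of_isBridge_of_reachable_deleteIncidenceSet hu (hbridge u hu) hw
    (ConnectedComponent.exact (hwC.trans huC.symm))
  exact hne (congrArg (s(v, ·)) hwu)

theorem tree_flexible_iff_endvertex_alpha3Critical_general [Finite V]
    (G : SimpleGraph V) (v : V) (hbridge : ∀ u, G.Adj v u → G.IsBridge s(v, u)) :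
    IsFlexible G v ↔ ∃ u, IsAlpha3Critical G v u :=
  ⟨fun hv ↦ hv.exists_isAlpha3Critical hbridge, fun ⟨_, hu⟩ ↦ hu.isFlexible_left⟩

end FlexibleVertices

/-- A vertex of a tree is flexible (in some but not all maximum dissociation sets) iff
it is an end-vertex of an `α₃`-critical edge. -/
theorem tree_flexible_iff_endvertex_alpha3Critical {V : Type*} [Fintype V] [DecidableEq V]
    (T : SimpleGraph V) (hT : T.IsTree) (v : V) :
    IsFlexible T v ↔ ∃ u : V, IsAlpha3Critical T v u :=
  tree_flexible_iff_endvertex_alpha3Critical_general T v fun _ hu ↦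
    isAcyclic_iff_forall_adj_isBridge.1 hT.isAcyclic hu
end

section
/- Let T be a tree. Then every maximum dissociation set of T contains exactly two vertices of each critical 3-path of T (a 3-path both of whose edges are α₃-critical in T). -/
open SimpleGraph

/-!
A dissociation set `S` avoiding both ends of a critical bridge `ab` is never maximum. Indeed, let
`A` be the side of `a` once `ab` is deleted, and let `D` be a dissociation set of `G - ab` with more
than `α₃(G)` vertices. Swapping `S` and `D` on one side of the bridge gives two sets,
`(S ∩ A) ∪ (D \ A)` and `(D ∩ A) ∪ (S \ A)`. No edge of `G - ab` leaves `A`, and neither set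
contains both `a` and `b`, so both are dissociation sets of `G`. Their cardinalities add up to
`|S| + |D|`, and the first is at most `α₃(G) < |D|`, so the second is larger than `|S|`. Moreover
it differs from `S` only inside `A`.

On a critical path `abc`, start from `S \ {a, b, c}` and improve it first across `ab` and then
across `cb`: the first improvement stays away from `b` and `c`, so the second one applies. Hence
`|S \ {a, b, c}| + 2 ≤ α₃(G)`.
-/

section

variable {V : Type*} {G H : SimpleGraph V} {S D X Y : Finset V} {a b c x y : V}

namespace IsDissocSet

lemma empty : IsDissocSet G ∅ :=
  fun v hv => absurd hv (Finset.notMem_empty v)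

lemma mono_graph (hS : IsDissocSet G S) (hHG : H ≤ G) : IsDissocSet H S :=
  fun v hv u hu w hw hvu hvw => hS v hv u hu w hw (hHG hvu) (hHG hvw)

lemma subset_s12 (hS : IsDissocSet G S) (hDS : D ⊆ S) : IsDissocSet G D :=
  fun v hv u hu w hw => hS v (hDS hv) u (hDS hu) w (hDS hw)

lemma union [DecidableEq V] (hS : IsDissocSet G S) (hD : IsDissocSet G D)
    (hSD : ∀ x ∈ S, ∀ y ∈ D, ¬ G.Adj x y) : IsDissocSet G (S ∪ D) := by
  intro v hv u hu w hw hvu hvw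
  simp only [Finset.mem_union] at hv hu hw
  rcases hv with hv | hv
  · exact hS v hv u (hu.resolve_right fun h => hSD v hv u h hvu)
      w (hw.resolve_right fun h => hSD v hv w h hvw) hvu hvw
  · exact hD v hv u (hu.resolve_left fun h => hSD u h v hv hvu.symm)
      w (hw.resolve_left fun h => hSD w h v hv hvw.symm) hvu hvw

lemma of_deleteEdges_s12 (hD : IsDissocSet (G.deleteEdges {s(a, b)}) D) (hab : a ∈ D → b ∉ D) :
    IsDissocSet G D := by
  have adj_deleteEdges : ∀ x ∈ D, ∀ y ∈ D, G.Adj x y → (G.deleteEdges {s(a, b)}).Adj x y := by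
    intro x hx y hy hxy
    refine deleteEdges_adj.2 ⟨hxy, fun h => ?_⟩
    rcases Sym2.eq_iff.1 h with ⟨rfl, rfl⟩ | ⟨rfl, rfl⟩
    · exact hab hx hy
    · exact hab hy hx
  exact fun v hv u hu w hw hvu hvw =>
    hD v hv u hu w hw (adj_deleteEdges v hv u hu hvu) (adj_deleteEdges v hv w hw hvw)

lemma card_filter_threePath_le_two [DecidableEq V] (hS : IsDissocSet G S) (hab : G.Adj a b)
    (hbc : G.Adj b c) (hac : a ≠ c) : (({a, b, c} : Finset V).filter (· ∈ S)).card ≤ 2 := by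
  have exists_notMem : ∃ x ∈ ({a, b, c} : Finset V), x ∉ S := by
    by_contra! h
    exact hac (hS b (h b (by simp)) a (h a (by simp)) c (h c (by simp)) hab.symm hbc)
  have card_lt : (({a, b, c} : Finset V).filter (· ∈ S)).card < ({a, b, c} : Finset V).card :=
    Finset.card_lt_card (Finset.filter_ssubset.2 exists_notMem)
  exact Nat.le_of_lt_succ (card_lt.trans_le Finset.card_le_three)

end IsDissocSet

namespace IsAlpha3Critical

lemma symm (h : IsAlpha3Critical G a b) : IsAlpha3Critical G b a :=
  ⟨h.1.symm, by simpa only [Sym2.eq_swap] using h.2⟩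

lemma exists_dissNum_lt_card (h : IsAlpha3Critical G a b) :
    ∃ D : Finset V, IsDissocSet (G.deleteEdges {s(a, b)}) D ∧ dissNum G < D.card := by
  have nonempty : {n | ∃ D : Finset V,
      IsDissocSet (G.deleteEdges {s(a, b)}) D ∧ D.card = n}.Nonempty :=
    ⟨_, ∅, IsDissocSet.empty, rfl⟩
  obtain ⟨_, ⟨D, hD, rfl⟩, hlt⟩ := exists_lt_of_lt_csSup nonempty h.2
  exact ⟨D, hD, hlt⟩

/- The `sSup` of an unbounded set of naturals is `0`, so `ab` can be critical only if the
dissociation sets of `G - ab`, and hence those of `G`, have bounded size. -/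
lemma card_le_dissNum (h : IsAlpha3Critical G a b) (hS : IsDissocSet G S) :
    S.card ≤ dissNum G := by
  have bdd_deleteEdges : BddAbove {n | ∃ D : Finset V,
      IsDissocSet (G.deleteEdges {s(a, b)}) D ∧ D.card = n} := by
    by_contra hunbdd
    have dissNum_eq_zero : dissNum (G.deleteEdges {s(a, b)}) = 0 :=
      (csSup_of_not_bddAbove hunbdd).trans csSup_empty
    exact Nat.not_lt_zero _ (dissNum_eq_zero ▸ h.2)
  refine le_csSup (bdd_deleteEdges.mono ?_) ⟨S, hS, rfl⟩
  rintro _ ⟨D, hD, rfl⟩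
  exact ⟨D, hD.mono_graph (G.deleteEdges_le _), rfl⟩

end IsAlpha3Critical

/-- The side of the edge `ab` at `a`: the vertices still reachable from `a` after deleting `ab`.
When `ab` is a bridge, this is one of the two parts into which deleting it splits its component. -/
def bridgeSide (G : SimpleGraph V) (a b : V) : Set V :=
  {v | (G.deleteEdges {s(a, b)}).Reachable a v}

lemma left_mem_bridgeSide : a ∈ bridgeSide G a b :=
  Reachable.refl a

lemma right_notMem_bridgeSide (hab : G.IsBridge s(a, b)) : b ∉ bridgeSide G a b :=
  isBridge_iff.1 hab

lemma mem_bridgeSide_of_adj (hxy : (G.deleteEdges {s(a, b)}).Adj x y)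
    (hx : x ∈ bridgeSide G a b) : y ∈ bridgeSide G a b :=
  hx.trans hxy.reachable

lemma notMem_bridgeSide_of_adj_right (hab : G.IsBridge s(a, b)) (hbc : G.Adj b c) (hac : a ≠ c) :
    c ∉ bridgeSide G a b := by
  have hbc_delete : (G.deleteEdges {s(a, b)}).Adj b c :=
    deleteEdges_adj.2 ⟨hbc, fun h => by
      rw [Set.mem_singleton_iff, Sym2.eq_swap, Sym2.congr_left] at h
      exact hac h.symm⟩
  exact fun hc => right_notMem_bridgeSide hab (mem_bridgeSide_of_adj hbc_delete.symm hc)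

open scoped Classical in
/-- The finite set that agrees with `X` inside `A` and with `Y` outside `A`; this is `Set.ite` for
finite sets. It is used to exchange two dissociation sets on one side of a bridge. -/
noncomputable def splice (A : Set V) (X Y : Finset V) : Finset V :=
  X.filter (· ∈ A) ∪ Y.filter (· ∉ A)

lemma mem_splice {A : Set V} : x ∈ splice A X Y ↔ x ∈ X ∧ x ∈ A ∨ x ∈ Y ∧ x ∉ A := by
  simp only [splice, Finset.mem_union, Finset.mem_filter]

lemma card_splice_add_card_splice_swap (A : Set V) (X Y : Finset V) :
    (splice A X Y).card + (splice A Y X).card = X.card + Y.card := by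
  classical
  rw [splice, splice, Finset.card_union_of_disjoint (Finset.disjoint_filter_filter_not X Y _),
    Finset.card_union_of_disjoint (Finset.disjoint_filter_filter_not Y X _),
    ← X.card_filter_add_card_filter_not (· ∈ A), ← Y.card_filter_add_card_filter_not (· ∈ A)]
  lia

lemma IsDissocSet.splice_bridgeSide (hbridge : G.IsBridge s(a, b))
    (hX : IsDissocSet (G.deleteEdges {s(a, b)}) X) (hY : IsDissocSet (G.deleteEdges {s(a, b)}) Y)
    (hab : a ∈ X → b ∉ Y) : IsDissocSet G (splice (bridgeSide G a b) X Y) := by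
  classical
  have splice_deleteEdges :
      IsDissocSet (G.deleteEdges {s(a, b)}) (splice (bridgeSide G a b) X Y) :=
    (hX.subset_s12 (Finset.filter_subset _ _)).union (hY.subset_s12 (Finset.filter_subset _ _))
      fun x hx y hy hxy =>
        (Finset.mem_filter.1 hy).2 (mem_bridgeSide_of_adj hxy (Finset.mem_filter.1 hx).2)
  refine splice_deleteEdges.of_deleteEdges_s12 fun ha hb => hab ?_ ?_
  · exact ((mem_splice.1 ha).resolve_right fun h => h.2 left_mem_bridgeSide).1
  · exact ((mem_splice.1 hb).resolve_left fun h => right_notMem_bridgeSide hbridge h.2).1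

lemma IsAlpha3Critical.exists_isDissocSet_card_lt (hcrit : IsAlpha3Critical G a b)
    (hbridge : G.IsBridge s(a, b)) (hS : IsDissocSet G S) (ha : a ∉ S) (hb : b ∉ S) :
    ∃ S' : Finset V, IsDissocSet G S' ∧ S.card < S'.card ∧
      ∀ x ∈ S', x ∉ bridgeSide G a b → x ∈ S := by
  obtain ⟨D, hD, hlt⟩ := hcrit.exists_dissNum_lt_card
  have hS_delete : IsDissocSet (G.deleteEdges {s(a, b)}) S := hS.mono_graph (G.deleteEdges_le _)
  have hSD : IsDissocSet G (splice (bridgeSide G a b) S D) :=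
    hS_delete.splice_bridgeSide hbridge hD fun h => absurd h ha
  have hDS : IsDissocSet G (splice (bridgeSide G a b) D S) :=
    hD.splice_bridgeSide hbridge hS_delete fun _ => hb
  refine ⟨_, hDS, ?_, fun x hx hxA => ((mem_splice.1 hx).resolve_left fun h => hxA h.2).1⟩
  have hSD_le := hcrit.card_le_dissNum hSD
  have card_sum := card_splice_add_card_splice_swap (bridgeSide G a b) S D
  lia

lemma IsDissocSet.card_sdiff_threePath_add_two_le_dissNum [DecidableEq V] (hS : IsDissocSet G S)
    (hac : a ≠ c) (hab : IsAlpha3Critical G a b) (hbc : IsAlpha3Critical G b c)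
    (hab_bridge : G.IsBridge s(a, b)) (hbc_bridge : G.IsBridge s(b, c)) :
    (S \ {a, b, c}).card + 2 ≤ dissNum G := by
  obtain ⟨S₁, hS₁, hlt₁, hsub₁⟩ := hab.exists_isDissocSet_card_lt hab_bridge
    (hS.subset_s12 Finset.sdiff_subset : IsDissocSet G (S \ {a, b, c})) (by simp) (by simp)
  have hb_side : b ∉ bridgeSide G a b := right_notMem_bridgeSide hab_bridge
  have hc_side : c ∉ bridgeSide G a b := notMem_bridgeSide_of_adj_right hab_bridge hbc.1 hac
  have hb : b ∉ S₁ := fun hb => by simpa using hsub₁ b hb hb_side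
  have hc : c ∉ S₁ := fun hc => by simpa using hsub₁ c hc hc_side
  obtain ⟨S₂, hS₂, hlt₂, -⟩ :=
    hbc.symm.exists_isDissocSet_card_lt (by rwa [Sym2.eq_swap]) hS₁ hc hb
  have hle := hab.card_le_dissNum hS₂
  lia

theorem tree_maxDissoc_exactly_two_of_critical_threePath_general [DecidableEq V]
    (hS : IsMaxDissocSet G S) (hac : a ≠ c)
    (hab : IsAlpha3Critical G a b) (hbc : IsAlpha3Critical G b c)
    (hab_bridge : G.IsBridge s(a, b)) (hbc_bridge : G.IsBridge s(b, c)) :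
    (({a, b, c} : Finset V).filter (fun x => x ∈ S)).card = 2 := by
  have card_le : (({a, b, c} : Finset V).filter (· ∈ S)).card ≤ 2 :=
    hS.1.card_filter_threePath_le_two hab.1 hbc.1 hac
  have card_add_two_le : (S \ {a, b, c}).card + 2 ≤ S.card :=
    hS.2 ▸ hS.1.card_sdiff_threePath_add_two_le_dissNum hac hab hbc hab_bridge hbc_bridge
  have card_split : (S \ {a, b, c}).card + (({a, b, c} : Finset V).filter (· ∈ S)).card =
      S.card := by
    rw [Finset.filter_mem_eq_inter, Finset.inter_comm, Finset.card_sdiff_add_card_inter]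
  lia

end

/-- Every maximum dissociation set of a tree contains exactly two vertices of each
critical `3`-path (a `3`-path both of whose edges are `α₃`-critical). -/
theorem tree_maxDissoc_exactly_two_of_critical_threePath {V : Type*} [Fintype V]
    [DecidableEq V] (T : SimpleGraph V) (hT : T.IsTree) :
    ∀ S : Finset V, IsMaxDissocSet T S → ∀ a b c : V, IsKPath T 3 [a, b, c] →
      IsAlpha3Critical T a b → IsAlpha3Critical T b c →
        (({a, b, c} : Finset V).filter (fun x => x ∈ S)).card = 2 := by
  intro S hS a b c hpath hab hbc
  have hac : a ≠ c := by
    rintro rfl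
    simpa using hpath.2.1
  have isBridge_of_adj := isAcyclic_iff_forall_adj_isBridge.1 hT.isAcyclic
  exact tree_maxDissoc_exactly_two_of_critical_threePath_general hS hac hab hbc
    (isBridge_of_adj hab.1) (isBridge_of_adj hbc.1)
end
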